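/- Let Ω ⊂ ℝ^d be compact and convex with non-negligible interior, and let μ, ν ∈ 𝒫(Ω) with μ absolutely continuous with respect to Lebesgue measure. Then for every λ > 0: (a) the WROF problem min_{ρ ∈ 𝒫(Ω)} (1/2)W₂²(μ,ρ) + λ W₁(ρ,ν) has a unique solution ρ_λ, and ρ_λ = (T_λ)_# μ where T_λ is any Borel map equal μ-a.e. to I − ∇φ_λ^{c₂} with φ_λ a solution of the dual problem sup_{φ ∈ λ-Lip(Ω)} ∫_Ω φ^{c₂} dμ + ∫_Ω φ dν; (b) ρ_λ is also a solution of the projection problem min_{ρ ∈ B_λ(μ)} D_λ(ν, ρ); (c) the values of the WROF problem, of the dual problem, and of (1/2)W₂²(ν,μ) − D_λ(ν, ρ_λ) all coincide. -/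

import Mathlib

/-!
The argument rests on Kantorovich duality for the Huber cost, which is the infimal convolution of
`c₂` and `λ|·|`: for `x, y` in the convex set `Ω` it is attained at `mid lam x y`, the point of the
segment from `x` to `y` at distance `min λ |x - y|` from `x`.

Kantorovich duality on a compact metric space (`kantorovich`), including attainment of the primal
problem, follows from Hahn–Banach and Riesz–Markov–Kakutani. The sublinear functional
`h ↦ inf {∫ u dμ + ∫ v dν : h(x, y) ≤ u(x) + v(y)}` on `C(X × X)` dominates a linear functional
agreeing with it at `-c`; this functional is positive, and the measure representing it is an
optimal coupling.

Let `γ` be an optimal plan for the Huber cost between `μ` and `ν`, and let `ρ` be the image of `γ`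
under `mid`. Splitting each transport at `mid` gives `wrof ρ ≤ ∫ huber dγ`. Every admissible pair
`(u, v)` for the Huber cost is improved by the `λ`-Lipschitz function `φ = u^huber`, which satisfies
`v ≤ φ` and `u ≤ φ^{c₂}`, so `∫ huber dγ` is at most the dual value (`huber_cost_le_dualJ`).
Conversely, the dual value is at most `wrof ρ'` for every `ρ'`, and if equality holds, a quadratic
optimal plan from `μ` to `ρ'` is concentrated on the set where `φ^{c₂}(x) + φ(y) = c₂(x, y)`. There
`y = x - ∇φ^{c₂}(x)` at every point of differentiability, hence `μ`-a.e. by Rademacher, because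
`φ^{c₂} - |·|²/2` is Lipschitz. So `ρ'` is the image of `μ` under `I - ∇φ^{c₂}`
(`dualJ_le_wrof`), which gives uniqueness.

A dual solution `φ₀` exists by Arzelà–Ascoli (`exists_dualSol`). It lies in the subdifferential of
`½ W₂²(·, μ)` at `ρ`, while any `λ`-Lipschitz `φ` in the subdifferential at any `ρ'` satisfies
`½ W₂²(ρ', μ) + ∫ φ d(ν - ρ') = ∫ φ^{c₂} dμ + ∫ φ dν`. Hence `½ W₂²(ν, μ) - D_λ(ν, ρ')` is at most
the dual value, with equality at `ρ`.
-/

open MeasureTheory Filter Topology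

noncomputable section

abbrev Ed (d : ℕ) := EuclideanSpace ℝ (Fin d)

variable {d : ℕ}

/-- `γ` is a coupling (transport plan) between `μ` and `ν`. -/
def IsCoupling (μ ν : Measure (Ed d)) (γ : Measure (Ed d × Ed d)) : Prop :=
  γ.map Prod.fst = μ ∧ γ.map Prod.snd = ν

/-- The optimal transport cost `𝓘_c(μ,ν)` for the pointwise cost `c`. -/
def tCost (c : Ed d → Ed d → ℝ) (μ ν : Measure (Ed d)) : ℝ :=
  sInf {r | ∃ γ : Measure (Ed d × Ed d), IsCoupling μ ν γ ∧ r = ∫ p, c p.1 p.2 ∂γ}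

/-- The Wasserstein-1 distance. -/
def W1 (μ ν : Measure (Ed d)) : ℝ := tCost (fun x y => ‖x - y‖) μ ν

/-- The squared Wasserstein-2 distance `W₂²(μ,ν)`. -/
def W2sq (μ ν : Measure (Ed d)) : ℝ := tCost (fun x y => ‖x - y‖ ^ 2) μ ν

/-- The quadratic cost `c₂(x,y) = |x-y|²/2`. -/
def c2 (x y : Ed d) : ℝ := ‖x - y‖ ^ 2 / 2

/-- The Huber cost `c_{2,λ}`. -/
def huber (lam : ℝ) (x y : Ed d) : ℝ :=
  if ‖x - y‖ ≤ lam then ‖x - y‖ ^ 2 / 2 else lam * ‖x - y‖ - lam ^ 2 / 2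

/-- The `c`-transform on `Ω`: `φ^c(x) = inf_{y ∈ Ω} c(x,y) - φ(y)`. -/
def ctrans (c : Ed d → Ed d → ℝ) (Ω : Set (Ed d)) (φ : Ed d → ℝ) (x : Ed d) : ℝ :=
  sInf ((fun y => c x y - φ y) '' Ω)

/-- A Borel probability measure concentrated on `Ω`. -/
def ProbOn (Ω : Set (Ed d)) (μ : Measure (Ed d)) : Prop :=
  IsProbabilityMeasure μ ∧ μ Ωᶜ = 0

/-- `γ` is an optimal transport plan between `μ` and `ν` for cost `c`. -/
def IsOptimalPlan (c : Ed d → Ed d → ℝ) (μ ν : Measure (Ed d))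
    (γ : Measure (Ed d × Ed d)) : Prop :=
  IsCoupling μ ν γ ∧ ∀ γ' : Measure (Ed d × Ed d), IsCoupling μ ν γ' →
    ∫ p, c p.1 p.2 ∂γ ≤ ∫ p, c p.1 p.2 ∂γ'

/-- `T` is an optimal transport map from `μ` to `ν` for cost `c`. -/
def IsOptimalMap (c : Ed d → Ed d → ℝ) (μ ν : Measure (Ed d)) (T : Ed d → Ed d) : Prop :=
  AEMeasurable T μ ∧ μ.map T = ν ∧
    ∀ γ : Measure (Ed d × Ed d), IsCoupling μ ν γ →
      ∫ x, c x (T x) ∂μ ≤ ∫ p, c p.1 p.2 ∂γ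

/-- The WROF functional `(1/2) W₂²(μ,ρ) + λ W₁(ρ,ν)`. -/
def wrof (lam : ℝ) (μ ν ρ : Measure (Ed d)) : ℝ := W2sq μ ρ / 2 + lam * W1 ρ ν

/-- `ρ ∈ B_λ(μ)`: there exists an optimal plan for the Huber cost `c_{2,λ}` from `μ` to `ρ`
supported in `{|x-y| ≤ λ}`. -/
def Bset (lam : ℝ) (μ ρ : Measure (Ed d)) : Prop :=
  ∃ γ : Measure (Ed d × Ed d), IsOptimalPlan (huber lam) μ ρ γ ∧
    γ {p : Ed d × Ed d | lam < ‖p.1 - p.2‖} = 0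

/-- `φ` solves the dual problem `sup_{φ ∈ λ-Lip(Ω)} ∫ φ^{c₂} dμ + ∫ φ dν`. -/
def DualSol (Ω : Set (Ed d)) (lam : ℝ) (μ ν : Measure (Ed d)) (φ : Ed d → ℝ) : Prop :=
  LipschitzOnWith (Real.toNNReal lam) φ Ω ∧
    ∀ ψ : Ed d → ℝ, LipschitzOnWith (Real.toNNReal lam) ψ Ω →
      (∫ x, ctrans c2 Ω ψ x ∂μ) + ∫ x, ψ x ∂ν ≤ (∫ x, ctrans c2 Ω φ x ∂μ) + ∫ x, φ x ∂ν

/-- `φ ∈ ∂((1/2)W₂²(·,μ))(ρ)`, i.e. `φ ∈ C(Ω)` with `∫φ^{c₂}dμ + ∫φ dρ = (1/2)W₂²(ρ,μ)`. -/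
def InSubdiffW2 (Ω : Set (Ed d)) (μ ρ : Measure (Ed d)) (φ : Ed d → ℝ) : Prop :=
  ContinuousOn φ Ω ∧ (∫ x, ctrans c2 Ω φ x ∂μ) + ∫ x, φ x ∂ρ = W2sq ρ μ / 2

/-- The divergence `D_λ(ν,ρ)` with reference measure `μ`. -/
def Dlam (Ω : Set (Ed d)) (lam : ℝ) (μ ν ρ : Measure (Ed d)) : EReal :=
  ((W2sq ν μ / 2 : ℝ) : EReal) - ((W2sq ρ μ / 2 : ℝ) : EReal) -
    ⨆ φ ∈ {φ : Ed d → ℝ | InSubdiffW2 Ω μ ρ φ ∧ LipschitzOnWith (Real.toNNReal lam) φ Ω},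
      (((∫ x, φ x ∂ν) - ∫ x, φ x ∂ρ : ℝ) : EReal)

/-- `φ` is `c`-concave on `Ω`: `φ = ψ^c` for some `ψ`. -/
def CConcaveOn (c : Ed d → Ed d → ℝ) (Ω : Set (Ed d)) (φ : Ed d → ℝ) : Prop :=
  ∃ ψ : Ed d → ℝ, ∀ x ∈ Ω, φ x = ctrans c Ω ψ x

/-- The (topological) support of a measure. -/
def msupport {α : Type*} [TopologicalSpace α] [MeasurableSpace α] (γ : Measure α) : Set α :=
  {p | ∀ U : Set α, IsOpen U → p ∈ U → γ U ≠ 0}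

/-! ### Kantorovich duality on a compact metric space -/
section Duality

variable {X : Type*} [MetricSpace X] [CompactSpace X] [MeasurableSpace X]

/-- The values `∫ u dμ + ∫ v dν` over continuous pairs with `h(x, y) ≤ u(x) + v(y)`. The infimum of
this set is the sublinear functional of `h` to which Hahn–Banach is applied. -/
def domVals (μ ν : Measure X) (h : C(X × X, ℝ)) : Set ℝ :=
  {r | ∃ u v : C(X, ℝ), (∀ x y, h (x, y) ≤ u x + v y) ∧ r = (∫ x, u x ∂μ) + ∫ y, v y ∂ν}

theorem domVals_nonempty (μ ν : Measure X) (h : C(X × X, ℝ)) : (domVals μ ν h).Nonempty :=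
  ⟨_, ContinuousMap.const X ‖h‖, 0, fun x y => by
    simpa using (le_abs_self _).trans (h.norm_coe_le_norm (x, y)), rfl⟩

variable [BorelSpace X]

theorem integrable_cont {Y : Type*} [TopologicalSpace Y] [CompactSpace Y] [MeasurableSpace Y]
    [OpensMeasurableSpace Y] (μ : Measure Y) [IsFiniteMeasure μ] (u : C(Y, ℝ)) :
    Integrable (fun x => u x) μ :=
  (BoundedContinuousFunction.mkOfCompact u).integrable μ

theorem domVals_lower (μ ν : Measure X) [IsProbabilityMeasure μ] [IsProbabilityMeasure ν]
    (h : C(X × X, ℝ)) : ∀ r ∈ domVals μ ν h, ∫ p, h p ∂(μ.prod ν) ≤ r := by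
  rintro r ⟨u, v, huv, rfl⟩
  have hu : Integrable (fun p : X × X => u p.1) (μ.prod ν) :=
    (integrable_cont μ u).comp_fst ν
  have hv : Integrable (fun p : X × X => v p.2) (μ.prod ν) :=
    (integrable_cont ν v).comp_snd μ
  calc ∫ p, h p ∂(μ.prod ν) ≤ ∫ p, (u p.1 + v p.2) ∂(μ.prod ν) :=
        integral_mono (integrable_cont _ h) (hu.add hv) (fun p => huv p.1 p.2)
    _ = _ := by
        rw [integral_add hu hv, integral_fun_fst, integral_fun_snd]
        simp

theorem domVals_bdd (μ ν : Measure X) [IsProbabilityMeasure μ] [IsProbabilityMeasure ν]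
    (h : C(X × X, ℝ)) : BddBelow (domVals μ ν h) := ⟨_, domVals_lower μ ν h⟩

theorem exists_linear_le (μ ν : Measure X) [IsProbabilityMeasure μ] [IsProbabilityMeasure ν]
    (h₀ : C(X × X, ℝ)) : ∃ g : C(X × X, ℝ) →ₗ[ℝ] ℝ,
      g h₀ = sInf (domVals μ ν h₀) ∧ ∀ h, g h ≤ sInf (domVals μ ν h) := by
  set N : C(X × X, ℝ) → ℝ := fun h => sInf (domVals μ ν h) with hN
  have N_homle : ∀ c : ℝ, 0 < c → ∀ h, N (c • h) ≤ c * N h := by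
    intro c hc h
    rw [mul_comm, ← div_le_iff₀ hc]
    refine le_csInf (domVals_nonempty μ ν h) ?_
    rintro r ⟨u, v, huv, rfl⟩
    rw [div_le_iff₀ hc]
    refine csInf_le (domVals_bdd μ ν _) ⟨c • u, c • v, fun x y => ?_, ?_⟩
    · have := mul_le_mul_of_nonneg_left (huv x y) hc.le
      simp only [ContinuousMap.smul_apply, smul_eq_mul]; linarith
    · simp only [ContinuousMap.smul_apply, smul_eq_mul, integral_const_mul]; ring
  have N_hom : ∀ c : ℝ, 0 < c → ∀ h, N (c • h) = c * N h := by
    intro c hc h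
    refine le_antisymm (N_homle c hc h) ?_
    have := N_homle c⁻¹ (inv_pos.2 hc) (c • h)
    rw [smul_smul, inv_mul_cancel₀ hc.ne', one_smul] at this
    calc c * N h ≤ c * (c⁻¹ * N (c • h)) := mul_le_mul_of_nonneg_left this hc.le
      _ = N (c • h) := by field_simp
  have N_add : ∀ h k, N (h + k) ≤ N h + N k := by
    intro h k
    rw [← sub_le_iff_le_add]
    refine le_csInf (domVals_nonempty μ ν h) ?_
    rintro r ⟨u, v, huv, rfl⟩
    rw [sub_le_comm]
    refine le_csInf (domVals_nonempty μ ν k) ?_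
    rintro r ⟨u', v', huv', rfl⟩
    rw [sub_le_iff_le_add]
    refine csInf_le (domVals_bdd μ ν _) ⟨u + u', v + v', fun x y => ?_, ?_⟩
    · have := huv x y
      have := huv' x y
      simp only [ContinuousMap.add_apply]; linarith
    · simp only [ContinuousMap.add_apply]
      rw [integral_add (integrable_cont _ _) (integrable_cont _ _),
        integral_add (integrable_cont _ _) (integrable_cont _ _)]
      ring
  have N_0 : N 0 = 0 := by
    have := N_hom 2 (by norm_num) 0
    rw [smul_zero] at this; linarith
  let f := LinearPMap.mkSpanSingleton' (σ := RingHom.id ℝ) h₀ (N h₀) (by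
    intro c hc
    rcases smul_eq_zero.1 hc with h | h
    · simp [h]
    · simp [h, N_0])
  obtain ⟨g, hg1, hg2⟩ := exists_extension_of_le_sublinear f N N_hom N_add (by
    rintro ⟨x, hx⟩
    obtain ⟨c, rfl⟩ := Submodule.mem_span_singleton.1 hx
    rw [LinearPMap.mkSpanSingleton'_apply]
    simp only [RingHom.id_apply, smul_eq_mul]
    rcases lt_trichotomy c 0 with h | h | h
    · have h1 := N_add (c • h₀) ((-c) • h₀)
      rw [N_hom (-c) (by linarith), ← add_smul, add_neg_cancel, zero_smul, N_0] at h1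
      linarith
    · simp [h, N_0]
    · rw [N_hom c h])
  refine ⟨g, ?_, hg2⟩
  have hm : h₀ ∈ f.domain := Submodule.mem_span_singleton_self h₀
  have := hg1 ⟨h₀, hm⟩
  rw [LinearPMap.mkSpanSingleton'_apply_self] at this
  exact this

/-- Kantorovich duality with attainment of the primal problem: some coupling `γ` has cost within
every `ε > 0` of the value of an admissible dual pair. -/
theorem kantorovich (μ ν : Measure X) [IsProbabilityMeasure μ] [IsProbabilityMeasure ν]
    (c : C(X × X, ℝ)) : ∃ γ : Measure (X × X), γ.map Prod.fst = μ ∧ γ.map Prod.snd = ν ∧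
      ∀ ε > 0, ∃ u v : C(X, ℝ), (∀ x y, u x + v y ≤ c (x, y)) ∧
        ∫ p, c p ∂γ ≤ (∫ x, u x ∂μ) + (∫ y, v y ∂ν) + ε := by
  obtain ⟨g, hgc, hg⟩ := exists_linear_le μ ν (-c)
  have key : ∀ (h : C(X × X, ℝ)) (u v : C(X, ℝ)), (∀ x y, h (x, y) ≤ u x + v y) →
      g h ≤ (∫ x, u x ∂μ) + ∫ y, v y ∂ν := fun h u v huv =>
    (hg h).trans (csInf_le (domVals_bdd μ ν h) ⟨u, v, huv, rfl⟩)
  have hpos : ∀ h, 0 ≤ h → 0 ≤ g h := by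
    intro h hh
    have := key (-h) 0 0 (fun x y => by simpa using hh (x, y))
    simpa using this
  let toC : CompactlySupportedContinuousMap (X × X) ℝ →ₗ[ℝ] C(X × X, ℝ) :=
    { toFun := fun f => f.toContinuousMap
      map_add' := fun _ _ => rfl
      map_smul' := fun _ _ => rfl }
  let Λ : CompactlySupportedContinuousMap (X × X) ℝ →ₚ[ℝ] ℝ :=
    PositiveLinearMap.mk₀ (g ∘ₗ toC) (fun f hf => hpos _ (fun x => hf x))
  let γ := RealRMK.rieszMeasure Λ
  have hγ : ∀ h : C(X × X, ℝ), ∫ p, h p ∂γ = g h := fun h =>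
    RealRMK.integral_rieszMeasure Λ (CompactlySupportedContinuousMap.continuousMapEquiv h)
  have : IsFiniteMeasure γ := by
    have : IsFiniteMeasureOnCompacts γ := inferInstance
    exact ⟨isCompact_univ.measure_lt_top⟩
  have hfst : ∀ u : C(X, ℝ), ∫ p, u p.1 ∂γ = ∫ x, u x ∂μ := by
    intro u
    have h1 := hγ (u.comp ContinuousMap.fst)
    have h2 := key (u.comp ContinuousMap.fst) u 0 (fun x y => by simp)
    have h3 := key (-(u.comp ContinuousMap.fst)) (-u) 0 (fun x y => by simp)
    simp only [map_neg, ContinuousMap.neg_apply, integral_neg, ContinuousMap.zero_apply,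
      integral_zero] at h2 h3
    simp only [ContinuousMap.comp_apply, ContinuousMap.fst_apply] at h1
    linarith
  have hsnd : ∀ u : C(X, ℝ), ∫ p, u p.2 ∂γ = ∫ x, u x ∂ν := by
    intro u
    have h1 := hγ (u.comp ContinuousMap.snd)
    have h2 := key (u.comp ContinuousMap.snd) 0 u (fun x y => by simp)
    have h3 := key (-(u.comp ContinuousMap.snd)) 0 (-u) (fun x y => by simp)
    simp only [map_neg, ContinuousMap.neg_apply, integral_neg, ContinuousMap.zero_apply,
      integral_zero] at h2 h3
    simp only [ContinuousMap.comp_apply, ContinuousMap.snd_apply] at h1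
    linarith
  refine ⟨γ, ?_, ?_, ?_⟩
  · refine ext_of_forall_integral_eq_of_IsFiniteMeasure fun f => ?_
    rw [integral_map measurable_fst.aemeasurable f.continuous.aestronglyMeasurable]
    exact hfst f.toContinuousMap
  · refine ext_of_forall_integral_eq_of_IsFiniteMeasure fun f => ?_
    rw [integral_map measurable_snd.aemeasurable f.continuous.aestronglyMeasurable]
    exact hsnd f.toContinuousMap
  · intro ε hε
    obtain ⟨r, ⟨u, v, huv, rfl⟩, hr⟩ :=
      exists_lt_of_csInf_lt (domVals_nonempty μ ν (-c)) (lt_add_of_pos_right _ hε)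
    refine ⟨-u, -v, fun x y => ?_, ?_⟩
    · have := huv x y
      simp only [ContinuousMap.neg_apply] at this ⊢
      linarith
    · rw [hγ c]
      rw [← hgc, map_neg] at hr
      simp only [ContinuousMap.neg_apply, integral_neg]
      linarith

end Duality

/-! ### Couplings of measures concentrated on a compact set -/
section Transfer

variable {Ω : Set (Ed d)} {μ ν ρ : Measure (Ed d)} {γ : Measure (Ed d × Ed d)}

/-- Extension by zero of a function on the subtype `Ω` to the whole space. -/
def extZero (Ω : Set (Ed d)) (f : Ω → ℝ) (x : Ed d) : ℝ :=
  open Classical in if h : x ∈ Ω then f ⟨x, h⟩ else 0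

theorem extZero_coe (f : Ω → ℝ) (x : Ω) : extZero Ω f x = f x := by
  simp [extZero]

theorem continuousOn_extZero {f : Ω → ℝ} (hf : Continuous f) : ContinuousOn (extZero Ω f) Ω := by
  rw [continuousOn_iff_continuous_domRestrict]
  convert hf using 1
  ext x
  exact extZero_coe f x

theorem ProbOn.map_comap (hΩ : IsCompact Ω) (hμ : ProbOn Ω μ) :
    (μ.comap (Subtype.val : Ω → Ed d)).map Subtype.val = μ := by
  rw [map_comap_subtype_coe hΩ.measurableSet]
  exact Measure.restrict_eq_self_of_ae_mem (by rw [ae_iff]; exact hμ.2)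

theorem ProbOn.ae_mem (hμ : ProbOn Ω μ) : ∀ᵐ x ∂μ, x ∈ Ω := by
  rw [ae_iff]; exact hμ.2

theorem ProbOn.integrable (hΩ : IsCompact Ω) (hμ : ProbOn Ω μ) {u : Ed d → ℝ}
    (hu : ContinuousOn u Ω) : Integrable u μ := by
  have := hμ.1
  have h := hu.integrableOn_compact (μ := μ) hΩ
  rwa [IntegrableOn, Measure.restrict_eq_self_of_ae_mem hμ.ae_mem] at h

theorem IsCoupling.isProb (hμ : ProbOn Ω μ) (h : IsCoupling μ ν γ) : IsProbabilityMeasure γ := by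
  constructor
  have h1 := hμ.1.measure_univ
  rw [← h.1, Measure.map_apply measurable_fst MeasurableSet.univ] at h1
  simpa using h1

theorem IsCoupling.ae_mem (hμ : ProbOn Ω μ) (hν : ProbOn Ω ν) (h : IsCoupling μ ν γ) :
    ∀ᵐ p ∂γ, p.1 ∈ Ω ∧ p.2 ∈ Ω := by
  have h1 := hμ.ae_mem
  have h2 := hν.ae_mem
  rw [← h.1] at h1
  rw [← h.2] at h2
  exact (ae_of_ae_map measurable_fst.aemeasurable h1).and
    (ae_of_ae_map measurable_snd.aemeasurable h2)

theorem IsCoupling.integrable (hΩ : IsCompact Ω) (hμ : ProbOn Ω μ) (hν : ProbOn Ω ν)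
    (h : IsCoupling μ ν γ) {f : Ed d × Ed d → ℝ} (hf : ContinuousOn f (Ω ×ˢ Ω)) :
    Integrable f γ := by
  have := h.isProb hμ
  have h' := hf.integrableOn_compact (μ := γ) (hΩ.prod hΩ)
  have hm : ∀ᵐ p ∂γ, p ∈ Ω ×ˢ Ω := h.ae_mem hμ hν
  rwa [IntegrableOn, Measure.restrict_eq_self_of_ae_mem hm] at h'

theorem IsCoupling.integral_fst (h : IsCoupling μ ν γ) {u : Ed d → ℝ} (hu : Integrable u μ) :
    ∫ p, u p.1 ∂γ = ∫ x, u x ∂μ := by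
  conv_rhs => rw [← h.1]
  rw [integral_map measurable_fst.aemeasurable]
  rw [h.1]; exact hu.1

theorem IsCoupling.integral_snd (h : IsCoupling μ ν γ) {u : Ed d → ℝ} (hu : Integrable u ν) :
    ∫ p, u p.2 ∂γ = ∫ x, u x ∂ν := by
  conv_rhs => rw [← h.2]
  rw [integral_map measurable_snd.aemeasurable]
  rw [h.2]; exact hu.1

/-- Weak duality, together with complementary slackness: if the dual value of `(u, v)` reaches the
cost of `γ`, then `u ⊕ v = c` holds `γ`-almost everywhere. -/
theorem weak_duality (hΩ : IsCompact Ω) (hμ : ProbOn Ω μ) (hν : ProbOn Ω ν)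
    (h : IsCoupling μ ν γ) {u v : Ed d → ℝ} (hu : ContinuousOn u Ω) (hv : ContinuousOn v Ω)
    {c : Ed d → Ed d → ℝ} (hc : Continuous (fun p : Ed d × Ed d => c p.1 p.2))
    (huv : ∀ x ∈ Ω, ∀ y ∈ Ω, u x + v y ≤ c x y) :
    (∫ x, u x ∂μ) + (∫ y, v y ∂ν) ≤ ∫ p, c p.1 p.2 ∂γ ∧
    (∫ p, c p.1 p.2 ∂γ ≤ (∫ x, u x ∂μ) + (∫ y, v y ∂ν) →
      ∀ᵐ p ∂γ, u p.1 + v p.2 = c p.1 p.2) := by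
  have hui : Integrable (fun p : Ed d × Ed d => u p.1) γ :=
    h.integrable hΩ hμ hν (hu.comp continuousOn_fst fun p hp => hp.1)
  have hvi : Integrable (fun p : Ed d × Ed d => v p.2) γ :=
    h.integrable hΩ hμ hν (hv.comp continuousOn_snd fun p hp => hp.2)
  have hci : Integrable (fun p : Ed d × Ed d => c p.1 p.2) γ :=
    h.integrable hΩ hμ hν hc.continuousOn
  have hle : ∀ᵐ p ∂γ, u p.1 + v p.2 ≤ c p.1 p.2 := by
    filter_upwards [h.ae_mem hμ hν] with p hp using huv _ hp.1 _ hp.2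
  have hsum : ∫ p, (u p.1 + v p.2) ∂γ = (∫ x, u x ∂μ) + (∫ y, v y ∂ν) := by
    rw [integral_add hui hvi, h.integral_fst (hμ.integrable hΩ hu),
      h.integral_snd (hν.integrable hΩ hv)]
  have hmono := integral_mono_ae (hui.add hvi) hci hle
  simp only [Pi.add_apply] at hmono
  rw [hsum] at hmono
  refine ⟨hmono, fun hge => ?_⟩
  exact (integral_eq_iff_of_ae_le (hui.add hvi) hci hle).1
    (by simp only [Pi.add_apply]; rw [hsum]; exact le_antisymm hmono hge)

theorem kantorovich_on (hΩ : IsCompact Ω) (hμ : ProbOn Ω μ) (hν : ProbOn Ω ν)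
    {c : Ed d → Ed d → ℝ} (hc : Continuous (fun p : Ed d × Ed d => c p.1 p.2)) :
    ∃ γ, IsCoupling μ ν γ ∧ ∀ ε > 0, ∃ u v : Ed d → ℝ, ContinuousOn u Ω ∧ ContinuousOn v Ω ∧
      (∀ x ∈ Ω, ∀ y ∈ Ω, u x + v y ≤ c x y) ∧
      ∫ p, c p.1 p.2 ∂γ ≤ (∫ x, u x ∂μ) + (∫ y, v y ∂ν) + ε := by
  have : CompactSpace Ω := isCompact_iff_compactSpace.1 hΩ
  have key : ∀ {κ : Measure (Ed d)}, ProbOn Ω κ →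
      IsProbabilityMeasure (κ.comap (Subtype.val : Ω → Ed d)) := by
    intro κ hκ
    constructor
    have h1 := hκ.1.measure_univ
    rw [← hκ.map_comap hΩ, Measure.map_apply measurable_subtype_coe MeasurableSet.univ] at h1
    simpa using h1
  have := key hμ
  have := key hν
  have emb : MeasurableEmbedding (Subtype.val : Ω → Ed d) :=
    MeasurableEmbedding.subtype_coe hΩ.measurableSet
  have hcomap : ∀ {κ : Measure (Ed d)}, ProbOn Ω κ → ∀ u : Ω → ℝ,
      ∫ x, extZero Ω u x ∂κ = ∫ x, u x ∂(κ.comap (Subtype.val : Ω → Ed d)) := by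
    intro κ hκ u
    conv_lhs => rw [← hκ.map_comap hΩ]
    rw [emb.integral_map]
    simp only [extZero_coe]
  obtain ⟨γ, h1, h2, h3⟩ := kantorovich (μ.comap (Subtype.val : Ω → Ed d))
    (ν.comap (Subtype.val : Ω → Ed d))
    ⟨fun p : Ω × Ω => c p.1 p.2, hc.comp (by fun_prop :
      Continuous fun p : Ω × Ω => ((p.1 : Ed d), (p.2 : Ed d)))⟩
  let e : Ω × Ω → Ed d × Ed d := fun p => (p.1, p.2)
  have he : Measurable e := by fun_prop
  refine ⟨γ.map e, ⟨?_, ?_⟩, fun ε hε => ?_⟩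
  · rw [Measure.map_map measurable_fst he]
    rw [show (Prod.fst ∘ e) = Subtype.val ∘ (Prod.fst : Ω × Ω → Ω) from rfl,
      ← Measure.map_map measurable_subtype_coe measurable_fst, h1, hμ.map_comap hΩ]
  · rw [Measure.map_map measurable_snd he]
    rw [show (Prod.snd ∘ e) = Subtype.val ∘ (Prod.snd : Ω × Ω → Ω) from rfl,
      ← Measure.map_map measurable_subtype_coe measurable_snd, h2, hν.map_comap hΩ]
  · obtain ⟨u, v, huv, hle⟩ := h3 ε hε
    refine ⟨extZero Ω u, extZero Ω v, continuousOn_extZero u.continuous,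
      continuousOn_extZero v.continuous, fun x hx y hy => ?_, ?_⟩
    · simpa [extZero, hx, hy] using huv ⟨x, hx⟩ ⟨y, hy⟩
    · rw [hcomap hμ, hcomap hν, integral_map he.aemeasurable hc.aestronglyMeasurable]
      exact hle

theorem tCost_le {c : Ed d → Ed d → ℝ} (hc : ∀ x y, 0 ≤ c x y) (h : IsCoupling μ ν γ) :
    tCost c μ ν ≤ ∫ p, c p.1 p.2 ∂γ := by
  refine csInf_le ⟨0, ?_⟩ ⟨γ, h, rfl⟩
  rintro r ⟨γ', -, rfl⟩
  exact integral_nonneg fun p => hc _ _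

/-- The infimum defining `tCost` is attained. -/
theorem exists_plan (hΩ : IsCompact Ω) (hμ : ProbOn Ω μ) (hν : ProbOn Ω ν)
    {c : Ed d → Ed d → ℝ} (hc : Continuous (fun p : Ed d × Ed d => c p.1 p.2)) :
    ∃ γ, IsCoupling μ ν γ ∧ tCost c μ ν = ∫ p, c p.1 p.2 ∂γ := by
  obtain ⟨γ, hγ, h⟩ := kantorovich_on hΩ hμ hν hc
  refine ⟨γ, hγ, IsLeast.csInf_eq ⟨⟨γ, hγ, rfl⟩, ?_⟩⟩
  rintro r ⟨γ', hγ', rfl⟩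
  refine le_of_forall_pos_le_add fun ε hε => ?_
  obtain ⟨u, v, hu, hv, huv, hle⟩ := h ε hε
  have := (weak_duality hΩ hμ hν hγ' hu hv hc huv).1
  linarith

theorem isCoupling_swap (h : IsCoupling μ ν γ) : IsCoupling ν μ (γ.map Prod.swap) := by
  constructor
  · rw [Measure.map_map measurable_fst measurable_swap]; exact h.2
  · rw [Measure.map_map measurable_snd measurable_swap]; exact h.1

theorem W2sq_comm (μ ν : Measure (Ed d)) : W2sq μ ν = W2sq ν μ := by
  unfold W2sq tCost
  congr 1
  ext r
  constructor <;>
  · rintro ⟨γ, h, rfl⟩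
    refine ⟨γ.map Prod.swap, isCoupling_swap h, ?_⟩
    rw [integral_map measurable_swap.aemeasurable (by fun_prop)]
    simp only [Prod.fst_swap, Prod.snd_swap, norm_sub_rev]

end Transfer

/-! ### The Huber cost as an infimal convolution -/
section Huber

variable {lam : ℝ}

theorem continuous_c2 : Continuous (fun p : Ed d × Ed d => c2 p.1 p.2) := by
  unfold c2; fun_prop

theorem huber_eq (lam : ℝ) (x y : Ed d) :
    huber lam x y = (‖x - y‖ ^ 2 - (max (‖x - y‖ - lam) 0) ^ 2) / 2 := by
  unfold huber
  split_ifs with h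
  · rw [max_eq_right (by linarith)]; ring
  · rw [max_eq_left (by linarith)]; ring

theorem continuous_huber : Continuous (fun p : Ed d × Ed d => huber lam p.1 p.2) := by
  simp only [huber_eq]; fun_prop

theorem huber_comm (x y : Ed d) : huber lam x y = huber lam y x := by
  simp only [huber, norm_sub_rev]

theorem huber_le (hlam : 0 < lam) (x y z : Ed d) :
    huber lam x y ≤ c2 x z + lam * ‖z - y‖ := by
  have h := norm_sub_le_norm_sub_add_norm_sub x z y
  have h0 := norm_nonneg (x - y)
  have h1 := norm_nonneg (x - z)
  have h2 := norm_nonneg (z - y)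
  unfold huber c2
  generalize ‖x - y‖ = r at *
  generalize ‖x - z‖ = s at *
  generalize ‖z - y‖ = t at *
  split_ifs with hr
  · rcases le_total r s with h' | h'
    · nlinarith [mul_nonneg hlam.le h2]
    · have : (r - s) * (r + s) ≤ t * (2 * lam) :=
        mul_le_mul (by linarith) (by linarith) (by linarith) h2
      linarith
  · nlinarith [sq_nonneg (s - lam), mul_le_mul_of_nonneg_left h hlam.le]

theorem huber_le_c2 (hlam : 0 < lam) (x y : Ed d) : huber lam x y ≤ c2 x y := by
  simpa using huber_le hlam x y y

/-- The point of the segment from `x` to `y` at distance `min lam ‖x - y‖` from `x`. It attains the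
infimum over `z` of `c2 x z + lam * ‖z - y‖`, which is `huber lam x y`. -/
def mid (lam : ℝ) (x y : Ed d) : Ed d :=
  if ‖x - y‖ ≤ lam then y else x + (lam / ‖x - y‖) • (y - x)

theorem measurable_mid : Measurable (fun p : Ed d × Ed d => mid lam p.1 p.2) := by
  unfold mid
  refine Measurable.ite (measurableSet_le (f := fun p : Ed d × Ed d => ‖p.1 - p.2‖)
    (g := fun _ => lam) (by fun_prop) (by fun_prop)) measurable_snd ?_
  exact measurable_fst.add ((measurable_const.div
    (measurable_fst.sub measurable_snd).norm).smul (measurable_snd.sub measurable_fst))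

theorem mid_mem (hlam : 0 < lam) {Ω : Set (Ed d)} (hΩ : Convex ℝ Ω) {x y : Ed d} (hx : x ∈ Ω)
    (hy : y ∈ Ω) : mid lam x y ∈ Ω := by
  unfold mid
  split_ifs with h
  · exact hy
  · push Not at h
    refine hΩ.add_smul_sub_mem hx hy ⟨by positivity, ?_⟩
    rw [div_le_one (hlam.trans h)]; exact h.le

theorem norm_sub_mid_le (hlam : 0 < lam) (x y : Ed d) : ‖x - mid lam x y‖ ≤ lam := by
  unfold mid
  split_ifs with h
  · exact h
  · push Not at h
    have h0 := hlam.trans h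
    rw [show x - (x + (lam / ‖x - y‖) • (y - x)) = -((lam / ‖x - y‖) • (y - x)) by abel,
      norm_neg, norm_smul, norm_sub_rev y x, Real.norm_of_nonneg (by positivity),
      div_mul_cancel₀ _ h0.ne']

theorem c2_mid_add (hlam : 0 < lam) (x y : Ed d) :
    c2 x (mid lam x y) + lam * ‖mid lam x y - y‖ = huber lam x y := by
  unfold mid huber c2
  split_ifs with h
  · simp
  · push Not at h
    have h0 := hlam.trans h
    have e1 : x - (x + (lam / ‖x - y‖) • (y - x)) = (lam / ‖x - y‖) • (x - y) := by module
    have e2 : x + (lam / ‖x - y‖) • (y - x) - y = (1 - lam / ‖x - y‖) • (x - y) := by module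
    have h1 : lam / ‖x - y‖ ≤ 1 := by rw [div_le_one h0]; exact h.le
    rw [e1, e2, norm_smul, norm_smul, Real.norm_of_nonneg (by positivity),
      Real.norm_of_nonneg (by linarith), sub_mul, div_mul_cancel₀ _ h0.ne']
    ring

theorem huber_lip (hlam : 0 < lam) (x y y' : Ed d) :
    huber lam x y' ≤ huber lam x y + lam * ‖y - y'‖ := by
  have h1 := huber_le hlam x y' (mid lam x y)
  have h2 := c2_mid_add hlam x y
  have h3 := norm_sub_le_norm_sub_add_norm_sub (mid lam x y) y y'
  nlinarith [mul_le_mul_of_nonneg_left h3 hlam.le]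

end Huber

/-! ### The `c`-transform -/
section CTransform

variable {Ω : Set (Ed d)} {c : Ed d → Ed d → ℝ} {φ ψ : Ed d → ℝ}

theorem ctrans_isLeast (hΩ : IsCompact Ω) (hne : Ω.Nonempty)
    (hc : Continuous (fun p : Ed d × Ed d => c p.1 p.2)) (hφ : ContinuousOn φ Ω) (x : Ed d) :
    ∃ y ∈ Ω, ctrans c Ω φ x = c x y - φ y ∧ ∀ z ∈ Ω, ctrans c Ω φ x ≤ c x z - φ z := by
  have hcx : Continuous (fun y => c x y) := hc.comp (by fun_prop : Continuous fun y => (x, y))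
  obtain ⟨y, hy, hmin⟩ := hΩ.exists_isMinOn hne (hcx.continuousOn.sub hφ)
  have hl : IsLeast ((fun y => c x y - φ y) '' Ω) (c x y - φ y) :=
    ⟨⟨y, hy, rfl⟩, by rintro _ ⟨z, hz, rfl⟩; exact hmin hz⟩
  have he : ctrans c Ω φ x = c x y - φ y := hl.csInf_eq
  exact ⟨y, hy, he, fun z hz => he ▸ hl.2 ⟨z, hz, rfl⟩⟩

theorem ctrans_le (hΩ : IsCompact Ω) (hc : Continuous (fun p : Ed d × Ed d => c p.1 p.2))
    (hφ : ContinuousOn φ Ω) (x : Ed d) {z : Ed d} (hz : z ∈ Ω) :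
    ctrans c Ω φ x ≤ c x z - φ z := by
  obtain ⟨y, -, -, h⟩ := ctrans_isLeast hΩ ⟨z, hz⟩ hc hφ x
  exact h z hz

theorem le_ctrans (hΩ : IsCompact Ω) (hne : Ω.Nonempty)
    (hc : Continuous (fun p : Ed d × Ed d => c p.1 p.2)) (hφ : ContinuousOn φ Ω) {x : Ed d}
    {a : ℝ} (h : ∀ z ∈ Ω, a ≤ c x z - φ z) : a ≤ ctrans c Ω φ x := by
  obtain ⟨y, hy, he, -⟩ := ctrans_isLeast hΩ hne hc hφ x
  rw [he]; exact h y hy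

/-- Up to `‖x‖² / 2`, the transform `φ^{c₂}` is an infimum of affine functions with slopes `-y`,
`y ∈ Ω`, hence globally Lipschitz because `Ω` is bounded. -/
theorem ctrans_c2_lip (hΩ : IsCompact Ω) (hne : Ω.Nonempty) (hφ : ContinuousOn φ Ω) :
    ∃ K, LipschitzWith K (fun x => ctrans c2 Ω φ x - ‖x‖ ^ 2 / 2) := by
  obtain ⟨R, hR⟩ := hΩ.isBounded.exists_norm_le
  refine ⟨R.toNNReal, LipschitzWith.of_le_add_mul _ fun x x' => ?_⟩
  obtain ⟨y, hy, he, -⟩ := ctrans_isLeast hΩ hne continuous_c2 hφ x'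
  have h1 := ctrans_le hΩ continuous_c2 hφ x hy
  have h2 : inner ℝ (x' - x) y ≤ ‖x' - x‖ * ‖y‖ := real_inner_le_norm _ _
  have h3 : ‖x' - x‖ * ‖y‖ ≤ ‖x' - x‖ * R := mul_le_mul_of_nonneg_left (hR y hy) (norm_nonneg _)
  have hR0 : 0 ≤ R := (norm_nonneg y).trans (hR y hy)
  rw [inner_sub_left] at h2
  rw [he, Real.coe_toNNReal _ hR0, dist_eq_norm, norm_sub_rev]
  simp only [c2, norm_sub_sq_real] at h1 ⊢
  linarith

theorem continuous_ctrans_c2 (hΩ : IsCompact Ω) (hne : Ω.Nonempty) (hφ : ContinuousOn φ Ω) :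
    Continuous (ctrans c2 Ω φ) := by
  obtain ⟨K, hK⟩ := ctrans_c2_lip hΩ hne hφ
  have h : Continuous (fun x => (ctrans c2 Ω φ x - ‖x‖ ^ 2 / 2) + ‖x‖ ^ 2 / 2) :=
    hK.continuous.add (by fun_prop)
  simpa using h

theorem ae_differentiable_ctrans (hΩ : IsCompact Ω) (hne : Ω.Nonempty) (hφ : ContinuousOn φ Ω) :
    ∀ᵐ x ∂(volume : Measure (Ed d)), DifferentiableAt ℝ (ctrans c2 Ω φ) x := by
  obtain ⟨K, hK⟩ := ctrans_c2_lip hΩ hne hφ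
  filter_upwards [hK.ae_differentiableAt (μ := volume)] with x hx
  have h : DifferentiableAt ℝ (fun x => (ctrans c2 Ω φ x - ‖x‖ ^ 2 / 2) + ‖x‖ ^ 2 / 2) x :=
    hx.add (by
      simp only [div_eq_mul_inv]
      exact ((differentiable_id (E := Ed d)).norm_sq ℝ).differentiableAt.mul_const _)
  simpa using h

/-- First-order condition: if `y ∈ Ω` realizes `φ^{c₂}(x)`, then `z ↦ c₂(z, y) - φ^{c₂}(z)` is
minimal at `x`, so its gradient `x - y - ∇φ^{c₂}(x)` vanishes. -/
theorem eq_sub_gradient (hΩ : IsCompact Ω) (hφ : ContinuousOn φ Ω) {x y : Ed d} (hy : y ∈ Ω)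
    (hx : DifferentiableAt ℝ (ctrans c2 Ω φ) x) (he : ctrans c2 Ω φ x + φ y = c2 x y) :
    y = x - gradient (ctrans c2 Ω φ) x := by
  have hg : HasGradientAt (ctrans c2 Ω φ) (gradient (ctrans c2 Ω φ) x) x := hx.hasGradientAt
  have hc : HasGradientAt (fun z => c2 z y) (x - y) x := by
    rw [hasGradientAt_iff_hasFDerivAt]
    have h1 : HasFDerivAt (fun z : Ed d => z - y) (ContinuousLinearMap.id ℝ (Ed d)) x :=
      (hasFDerivAt_id x).sub_const y
    have h2 := (h1.norm_sq).const_mul (1 / 2)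
    have e : (fun z => c2 z y) = fun z => (1 / 2) * ‖z - y‖ ^ 2 := by
      funext z; unfold c2; ring
    rw [e]
    have e' : InnerProductSpace.toDual ℝ (Ed d) (x - y) = ((1 / 2 : ℝ) •
        (2 : ℕ) • (innerSL ℝ (x - y)).comp (ContinuousLinearMap.id ℝ (Ed d))) := by
      ext v
      simp [InnerProductSpace.toDual_apply_apply]
    rw [e']
    exact h2
  have hmin : IsLocalMin (fun z => c2 z y - ctrans c2 Ω φ z) x := by
    refine Filter.Eventually.of_forall fun z => ?_
    have := ctrans_le hΩ continuous_c2 hφ z hy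
    simp only
    linarith
  have h0 := hmin.hasFDerivAt_eq_zero (hc.hasFDerivAt.sub hg.hasFDerivAt)
  rw [← map_sub, map_eq_zero_iff _ (LinearIsometryEquiv.injective _)] at h0
  rw [sub_eq_zero] at h0
  rw [← h0]; abel

theorem measurable_sub_gradient (f : Ed d → ℝ) : Measurable (fun x => x - gradient f x) := by
  refine measurable_id.sub ?_
  unfold gradient
  exact (LinearIsometryEquiv.continuous _).measurable.comp (measurable_fderiv ℝ f)

/-- A coupling concentrated on the contact set of `φ` is induced by the map `I - ∇φ^{c₂}`. -/
theorem eq_map_of_coupling {μ ρ : Measure (Ed d)} {γ : Measure (Ed d × Ed d)} (hΩ : IsCompact Ω)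
    (hne : Ω.Nonempty) (hμ : ProbOn Ω μ) (hρ : ProbOn Ω ρ)
    (hμac : μ ≪ (volume : Measure (Ed d))) (hφ : ContinuousOn φ Ω) (h : IsCoupling μ ρ γ)
    (he : ∀ᵐ p ∂γ, ctrans c2 Ω φ p.1 + φ p.2 = c2 p.1 p.2) :
    ρ = μ.map (fun x => x - gradient (ctrans c2 Ω φ) x) := by
  have hd := hμac.ae_le (ae_differentiable_ctrans hΩ hne hφ)
  rw [← h.1] at hd
  have hd' := ae_of_ae_map measurable_fst.aemeasurable hd
  rw [← h.2]
  conv_rhs => rw [← h.1]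
  rw [Measure.map_map (measurable_sub_gradient _) measurable_fst]
  refine Measure.map_congr ?_
  filter_upwards [hd', he, h.ae_mem hμ hρ] with p h1 h2 h3
  exact eq_sub_gradient hΩ hφ h3.2 h1 h2

/-- For `φ` Lipschitz with constant `lam`, the two inequalities bound `φ^{c₂}(x) + φ(y)` by
`c2 x (mid lam x y) + lam * ‖mid lam x y - y‖`, that is by `huber lam x y`. -/
theorem ctrans_c2_add_le {lam : ℝ} (hlam : 0 < lam) (hΩ : IsCompact Ω) (hconv : Convex ℝ Ω)
    (hφ : LipschitzOnWith (Real.toNNReal lam) φ Ω) {x y : Ed d} (hx : x ∈ Ω) (hy : y ∈ Ω) :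
    ctrans c2 Ω φ x + φ y ≤ ctrans c2 Ω φ x + φ (mid lam x y) + lam * ‖mid lam x y - y‖ ∧
    ctrans c2 Ω φ x + φ (mid lam x y) ≤ c2 x (mid lam x y) := by
  have hm := mid_mem hlam hconv hx hy
  have h1 := ctrans_le hΩ continuous_c2 hφ.continuousOn x hm
  have h2 := hφ.dist_le_mul y hy _ hm
  rw [Real.coe_toNNReal _ hlam.le, Real.dist_eq, dist_eq_norm, norm_sub_rev] at h2
  have h3 := (le_abs_self _).trans h2
  constructor <;> linarith

theorem ctrans_huber_lip {lam : ℝ} (hlam : 0 < lam) (hΩ : IsCompact Ω) (hne : Ω.Nonempty)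
    (hφ : ContinuousOn φ Ω) :
    LipschitzOnWith (Real.toNNReal lam) (ctrans (huber lam) Ω φ) Ω := by
  refine (LipschitzWith.of_le_add_mul _ fun y y' => ?_).lipschitzOnWith
  obtain ⟨x, hx, he, -⟩ := ctrans_isLeast hΩ hne (continuous_huber (lam := lam)) hφ y'
  have h1 := ctrans_le hΩ (continuous_huber (lam := lam)) hφ y hx
  have h2 := huber_lip hlam x y' y
  rw [huber_comm x y', huber_comm x y] at h2
  rw [Real.coe_toNNReal _ hlam.le, dist_eq_norm, norm_sub_rev]
  linarith

end CTransform

/-! ### The dual problem -/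
section Dual

variable {Ω : Set (Ed d)} {μ ν : Measure (Ed d)} {lam : ℝ}

/-- The dual functional `∫ φ^{c₂} dμ + ∫ φ dν`. -/
def dualJ (Ω : Set (Ed d)) (μ ν : Measure (Ed d)) (φ : Ed d → ℝ) : ℝ :=
  (∫ x, ctrans c2 Ω φ x ∂μ) + ∫ x, φ x ∂ν

/-- Stability of the dual functional under the one-sided bounds `ψ - a ≤ φ ≤ ψ + b` on `Ω`. The case
`a = -b` is its invariance under adding constants. -/
theorem dualJ_le_add (hΩ : IsCompact Ω) (hne : Ω.Nonempty) (hμ : ProbOn Ω μ) (hν : ProbOn Ω ν)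
    {φ ψ : Ed d → ℝ} (hφ : ContinuousOn φ Ω) (hψ : ContinuousOn ψ Ω) {a b : ℝ}
    (h1 : ∀ y ∈ Ω, ψ y - a ≤ φ y) (h2 : ∀ y ∈ Ω, φ y ≤ ψ y + b) :
    dualJ Ω μ ν φ ≤ dualJ Ω μ ν ψ + a + b := by
  have := hμ.1
  have := hν.1
  have hcφ := continuous_ctrans_c2 hΩ hne hφ
  have hcψ := continuous_ctrans_c2 hΩ hne hψ
  have i1 : ∫ x, ctrans c2 Ω φ x ∂μ ≤ ∫ x, (ctrans c2 Ω ψ x + a) ∂μ := by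
    refine integral_mono (hμ.integrable hΩ hcφ.continuousOn)
      ((hμ.integrable hΩ hcψ.continuousOn).add (integrable_const a)) fun x => ?_
    simp only
    rw [← sub_le_iff_le_add]
    refine le_ctrans hΩ hne continuous_c2 hψ fun z hz => ?_
    have := ctrans_le hΩ continuous_c2 hφ x hz
    have := h1 z hz
    linarith
  have i2 : ∫ x, φ x ∂ν ≤ ∫ x, (ψ x + b) ∂ν := by
    refine integral_mono_ae (hν.integrable hΩ hφ)
      ((hν.integrable hΩ hψ).add (integrable_const b)) ?_
    filter_upwards [hν.ae_mem] with x hx using h2 x hx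
  rw [integral_add (hμ.integrable hΩ hcψ.continuousOn) (integrable_const a)] at i1
  rw [integral_add (hν.integrable hΩ hψ) (integrable_const b)] at i2
  simp only [integral_const, probReal_univ, one_smul] at i1 i2
  unfold dualJ
  linarith

/-- The dual functional is continuous for uniform convergence and invariant under adding constants,
so it attains its maximum over the functions vanishing at a base point, which form a compact set. -/
theorem exists_dualSol (hΩ : IsCompact Ω) (hne : Ω.Nonempty) (hμ : ProbOn Ω μ)
    (hν : ProbOn Ω ν) : ∃ φ, DualSol Ω lam μ ν φ := by
  have : CompactSpace Ω := isCompact_iff_compactSpace.1 hΩ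
  obtain ⟨x0, hx0⟩ := hne
  have hne : Ω.Nonempty := ⟨x0, hx0⟩
  set K := Real.toNNReal lam
  let A : Set (BoundedContinuousFunction Ω ℝ) := {f | LipschitzWith K f ∧ f ⟨x0, hx0⟩ = 0}
  have hA : IsCompact A := by
    refine BoundedContinuousFunction.arzela_ascoli₂
      (Metric.closedBall 0 (K * Metric.diam (Set.univ : Set Ω))) (isCompact_closedBall _ _) A
      ?_ ?_ ?_
    · have e : A = (⋂ x : Ω, ⋂ y : Ω, {f | dist (f x) (f y) ≤ K * dist x y}) ∩
          {f | f ⟨x0, hx0⟩ = 0} := by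
        ext f
        simp only [A, Set.mem_ofPred_eq, Set.mem_inter_iff, Set.mem_iInter,
          lipschitzWith_iff_dist_le_mul]
      rw [e]
      refine IsClosed.inter ?_ ?_
      · refine isClosed_iInter fun x => isClosed_iInter fun y => ?_
        exact isClosed_le ((continuous_eval_const x).dist (continuous_eval_const y)) continuous_const
      · exact isClosed_eq (continuous_eval_const _) continuous_const
    · rintro f x ⟨hf, hf0⟩
      rw [Metric.mem_closedBall, ← hf0]
      exact (hf.dist_le_mul _ _).trans (mul_le_mul_of_nonneg_left
        (Metric.dist_le_diam_of_mem (isCompact_univ.isBounded) trivial trivial) K.2)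
    · exact (LipschitzWith.uniformEquicontinuous _ K fun f : A => f.2.1).equicontinuous
  have hJ : LipschitzWith 2 (fun f : BoundedContinuousFunction Ω ℝ =>
      dualJ Ω μ ν (extZero Ω f)) := by
    refine LipschitzWith.of_le_add_mul _ fun f g => ?_
    have hfg : ∀ y ∈ Ω, |extZero Ω f y - extZero Ω g y| ≤ dist f g := by
      intro y hy
      have h := BoundedContinuousFunction.dist_coe_le_dist (f := f) (g := g) ⟨y, hy⟩
      rwa [← extZero_coe f ⟨y, hy⟩, ← extZero_coe g ⟨y, hy⟩, Real.dist_eq] at h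
    have := dualJ_le_add hΩ hne hμ hν (continuousOn_extZero f.continuous)
      (continuousOn_extZero g.continuous) (a := dist f g) (b := dist f g)
      (fun y hy => by linarith [(abs_le.1 (hfg y hy)).1])
      (fun y hy => by linarith [(abs_le.1 (hfg y hy)).2])
    simp only [NNReal.coe_ofNat]
    linarith
  obtain ⟨f, hf, hmax⟩ := hA.exists_isMaxOn
    ⟨0, by refine ⟨LipschitzWith.const' _, rfl⟩⟩ hJ.continuous.continuousOn
  refine ⟨extZero Ω f, ?_, fun ψ hψ => ?_⟩
  · rw [lipschitzOnWith_iff_restrict]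
    convert hf.1 using 1
    ext x
    exact extZero_coe f x
  · have hψ' : LipschitzWith K (fun x : Ω => ψ x - ψ x0) := by
      have := lipschitzOnWith_iff_restrict.1 hψ
      refine LipschitzWith.of_dist_le_mul fun x y => ?_
      rw [dist_sub_right]
      exact this.dist_le_mul x y
    let g : BoundedContinuousFunction Ω ℝ :=
      BoundedContinuousFunction.mkOfCompact ⟨fun x : Ω => ψ x - ψ x0, hψ'.continuous⟩
    have hg : g ∈ A := ⟨hψ', by simp [g]⟩
    have h1 := hmax hg
    have hgv : ∀ y ∈ Ω, extZero Ω g y = ψ y - ψ x0 := fun y hy => extZero_coe g ⟨y, hy⟩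
    have h2 := dualJ_le_add hΩ hne hμ hν hψ.continuousOn (continuousOn_extZero g.continuous)
      (a := - ψ x0) (b := ψ x0) (fun y hy => by rw [hgv y hy]; linarith)
      (fun y hy => by rw [hgv y hy]; linarith)
    change dualJ Ω μ ν ψ ≤ dualJ Ω μ ν (extZero Ω f)
    simp only [Set.mem_ofPred_eq] at h1
    linarith

end Dual

/-! ### Primal and dual values -/
section Main

variable {Ω : Set (Ed d)} {μ ν ρ : Measure (Ed d)} {γ : Measure (Ed d × Ed d)} {lam : ℝ}
  {φ : Ed d → ℝ}

theorem half_W2sq_le (h : IsCoupling μ ν γ) : W2sq μ ν / 2 ≤ ∫ p, c2 p.1 p.2 ∂γ := by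
  have := tCost_le (c := fun x y => ‖x - y‖ ^ 2) (fun x y => by positivity) h
  unfold W2sq c2
  rw [integral_div]
  linarith

theorem exists_plan_W2 (hΩ : IsCompact Ω) (hμ : ProbOn Ω μ) (hν : ProbOn Ω ν) :
    ∃ γ, IsCoupling μ ν γ ∧ W2sq μ ν / 2 = ∫ p, c2 p.1 p.2 ∂γ := by
  obtain ⟨γ, hγ, h⟩ := exists_plan hΩ hμ hν (c := fun x y => ‖x - y‖ ^ 2) (by fun_prop)
  refine ⟨γ, hγ, ?_⟩
  unfold W2sq c2
  rw [integral_div, h]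

theorem ctrans_c2_add_le_c2 (hΩ : IsCompact Ω) (hφ : ContinuousOn φ Ω) :
    ∀ x ∈ Ω, ∀ y ∈ Ω, ctrans c2 Ω φ x + φ y ≤ c2 x y := fun x _ y hy => by
  linarith [ctrans_le hΩ continuous_c2 hφ x hy]

theorem integral_le_W1 (hΩ : IsCompact Ω) (hρ : ProbOn Ω ρ) (hν : ProbOn Ω ν) (hlam : 0 < lam)
    (hφ : LipschitzOnWith (Real.toNNReal lam) φ Ω) :
    (∫ x, φ x ∂ν) - (∫ x, φ x ∂ρ) ≤ lam * W1 ρ ν := by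
  obtain ⟨γ, hγ, h⟩ := exists_plan hΩ hρ hν (c := fun x y => ‖x - y‖) (by fun_prop)
  have hw := (weak_duality hΩ hρ hν hγ (u := fun x => - φ x) (v := φ)
    hφ.continuousOn.neg hφ.continuousOn (c := fun x y => lam * ‖x - y‖) (by fun_prop)
    (fun x hx y hy => by
      have h2 := hφ.dist_le_mul y hy x hx
      rw [Real.coe_toNNReal _ hlam.le, Real.dist_eq, dist_eq_norm, norm_sub_rev] at h2
      have h3 := (le_abs_self _).trans h2
      linarith)).1
  rw [integral_neg, integral_const_mul] at hw
  unfold W1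
  rw [h]
  linarith

/-- Weak duality for the WROF problem, with the equality case: a `ρ` whose WROF value is attained
by some `φ` is the image of `μ` under `I - ∇φ^{c₂}`. -/
theorem dualJ_le_wrof (hΩ : IsCompact Ω) (hne : Ω.Nonempty) (hμ : ProbOn Ω μ) (hν : ProbOn Ω ν)
    (hμac : μ ≪ (volume : Measure (Ed d))) (hρ : ProbOn Ω ρ) (hlam : 0 < lam)
    (hφ : LipschitzOnWith (Real.toNNReal lam) φ Ω) :
    dualJ Ω μ ν φ ≤ wrof lam μ ν ρ ∧ (wrof lam μ ν ρ ≤ dualJ Ω μ ν φ →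
      ρ = μ.map (fun x => x - gradient (ctrans c2 Ω φ) x)) := by
  obtain ⟨γ, hγ, h⟩ := exists_plan_W2 hΩ hμ hρ
  have hW1 := integral_le_W1 hΩ hρ hν hlam hφ
  obtain ⟨hw, heq⟩ := weak_duality hΩ hμ hρ hγ
    (continuous_ctrans_c2 hΩ hne hφ.continuousOn).continuousOn hφ.continuousOn continuous_c2
    (ctrans_c2_add_le_c2 hΩ hφ.continuousOn)
  unfold wrof dualJ
  rw [h]
  refine ⟨by linarith, fun hle => ?_⟩
  exact eq_map_of_coupling hΩ hne hμ hρ hμac hφ.continuousOn hγ (heq (by linarith))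

/-- Some coupling of `μ` and `ν` has Huber cost at most the dual value. An admissible pair `(u, v)`
for the Huber cost is replaced by the Lipschitz function `u^huber`, whose dual value is no smaller. -/
theorem huber_cost_le_dualJ (hΩ : IsCompact Ω) (hne : Ω.Nonempty) (hμ : ProbOn Ω μ)
    (hν : ProbOn Ω ν) (hlam : 0 < lam) : ∃ γ, IsCoupling μ ν γ ∧ ∀ φ, DualSol Ω lam μ ν φ →
      ∫ p, huber lam p.1 p.2 ∂γ ≤ dualJ Ω μ ν φ := by
  obtain ⟨γ, hγ, h⟩ := kantorovich_on hΩ hμ hν (continuous_huber (lam := lam))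
  refine ⟨γ, hγ, fun φ hφ => le_of_forall_pos_le_add fun ε hε => ?_⟩
  obtain ⟨u, v, hu, hv, huv, hle⟩ := h ε hε
  have hlip := ctrans_huber_lip hlam hΩ hne hu
  have hopt := hφ.2 _ hlip
  have h1 : ∫ x, u x ∂μ ≤ ∫ x, ctrans c2 Ω (ctrans (huber lam) Ω u) x ∂μ := by
    refine integral_mono_ae (hμ.integrable hΩ hu) (hμ.integrable hΩ
      (continuous_ctrans_c2 hΩ hne hlip.continuousOn).continuousOn) ?_
    filter_upwards [hμ.ae_mem] with x hx
    refine le_ctrans hΩ hne continuous_c2 hlip.continuousOn fun z hz => ?_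
    have h2 := ctrans_le hΩ (continuous_huber (lam := lam)) hu z hx
    have h3 := huber_le_c2 hlam x z
    rw [huber_comm] at h2
    linarith
  have h2 : ∫ x, v x ∂ν ≤ ∫ x, ctrans (huber lam) Ω u x ∂ν := by
    refine integral_mono_ae (hν.integrable hΩ hv) (hν.integrable hΩ hlip.continuousOn) ?_
    filter_upwards [hν.ae_mem] with y hy
    refine le_ctrans hΩ hne continuous_huber hu fun z hz => ?_
    have := huv z hz y hy
    rw [huber_comm] at this
    linarith
  unfold dualJ
  linarith

end Main

/-- Main theorem, part 1, detailed form. Let `Ω ⊂ ℝ^d` be compact and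
convex with non-negligible interior, `μ, ν ∈ 𝒫(Ω)` with `μ ≪ Lebesgue`, `λ > 0`. Then the
WROF problem has a unique solution `ρ_λ = (T_λ)_# μ` (where `T_λ = I - ∇φ_λ^{c₂}` μ-a.e.
for any solution `φ_λ` of the dual problem); `ρ_λ` also solves the projection problem
`min_{ρ ∈ B_λ(μ)} D_λ(ν,ρ)`; and the values of the WROF problem, of the dual problem, and
of `(1/2)W₂²(ν,μ) - D_λ(ν,ρ_λ)` coincide. -/
theorem stmt2 (d : ℕ) (Ω : Set (Ed d)) (hΩc : IsCompact Ω) (hΩconv : Convex ℝ Ω)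
    (hΩint : volume (interior Ω) ≠ 0)
    (μ ν : Measure (Ed d)) (hμ : ProbOn Ω μ) (hν : ProbOn Ω ν)
    (hμac : μ ≪ (volume : Measure (Ed d)))
    (lam : ℝ) (hlam : 0 < lam) :
    ∃ ρlam : Measure (Ed d), ProbOn Ω ρlam ∧
      -- (a) `ρ_λ` is the unique solution of the WROF problem ...
      (∀ ρ, ProbOn Ω ρ → wrof lam μ ν ρlam ≤ wrof lam μ ν ρ) ∧
      (∀ ρ, ProbOn Ω ρ → wrof lam μ ν ρ ≤ wrof lam μ ν ρlam → ρ = ρlam) ∧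
      -- ... and is given by `(T_λ)_# μ`, `T_λ = I - ∇φ_λ^{c₂}` μ-a.e.:
      (∀ φlam : Ed d → ℝ, DualSol Ω lam μ ν φlam →
        ∀ T : Ed d → Ed d, Measurable T →
          (∀ᵐ x ∂μ, T x = x - gradient (ctrans c2 Ω φlam) x) →
          μ.map T = ρlam) ∧
      -- (b) `ρ_λ` also solves the projection problem `min_{ρ ∈ B_λ(μ)} D_λ(ν,ρ)`:
      (Bset lam μ ρlam ∧
        ∀ ρ, ProbOn Ω ρ → Bset lam μ ρ → Dlam Ω lam μ ν ρlam ≤ Dlam Ω lam μ ν ρ) ∧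
      -- (c) the values coincide:
      (∀ φlam : Ed d → ℝ, DualSol Ω lam μ ν φlam →
        wrof lam μ ν ρlam = (∫ x, ctrans c2 Ω φlam x ∂μ) + ∫ x, φlam x ∂ν) ∧
      ((wrof lam μ ν ρlam : ℝ) : EReal)
        = ((W2sq ν μ / 2 : ℝ) : EReal) - Dlam Ω lam μ ν ρlam := by
  have hne : Ω.Nonempty := by
    by_contra h
    rw [Set.not_nonempty_iff_eq_empty] at h
    simp [h] at hΩint
  obtain ⟨γ, hγ, hγopt⟩ := huber_cost_le_dualJ hΩc hne hμ hν hlam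
  have hprob := hγ.isProb hμ
  have hmm : Measurable (fun p : Ed d × Ed d => (p.1, mid lam p.1 p.2)) :=
    measurable_fst.prodMk measurable_mid
  -- `ρlam` and the two plans below come from stopping every transport of `γ` at `mid`.
  set ρlam : Measure (Ed d) := γ.map (fun p => mid lam p.1 p.2) with hρdef
  set γ' : Measure (Ed d × Ed d) := γ.map (fun p => (p.1, mid lam p.1 p.2)) with hγ'def
  have hρ : ProbOn Ω ρlam := by
    refine ⟨Measure.isProbabilityMeasure_map measurable_mid.aemeasurable, ?_⟩
    rw [Measure.map_apply measurable_mid hΩc.measurableSet.compl]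
    have h : ∀ᵐ p ∂γ, mid lam p.1 p.2 ∈ Ω := by
      filter_upwards [hγ.ae_mem hμ hν] with p hp using mid_mem hlam hΩconv hp.1 hp.2
    exact ae_iff.1 h
  have hγ' : IsCoupling μ ρlam γ' := by
    constructor
    · rw [hγ'def, Measure.map_map measurable_fst hmm]; exact hγ.1
    · rw [hγ'def, Measure.map_map measurable_snd hmm]; rfl
  have hγ'' : IsCoupling ρlam ν (γ.map fun p => (mid lam p.1 p.2, p.2)) := by
    have hm2 : Measurable (fun p : Ed d × Ed d => (mid lam p.1 p.2, p.2)) :=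
      measurable_mid.prodMk measurable_snd
    constructor
    · rw [Measure.map_map measurable_fst hm2]; rfl
    · rw [Measure.map_map measurable_snd hm2]; exact hγ.2
  have hc2γ' : ∫ p, c2 p.1 p.2 ∂γ' = ∫ p, c2 p.1 (mid lam p.1 p.2) ∂γ := by
    rw [hγ'def, integral_map hmm.aemeasurable continuous_c2.aestronglyMeasurable]
  have hW1le : W1 ρlam ν ≤ ∫ p, ‖mid lam p.1 p.2 - p.2‖ ∂γ := by
    have := tCost_le (c := fun x y => ‖x - y‖) (fun x y => norm_nonneg _) hγ''
    rwa [integral_map (measurable_mid.prodMk measurable_snd).aemeasurable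
      (by fun_prop)] at this
  have hsum : ∫ p, huber lam p.1 p.2 ∂γ =
      (∫ p, c2 p.1 p.2 ∂γ') + lam * ∫ p, ‖mid lam p.1 p.2 - p.2‖ ∂γ := by
    have i1 : Integrable (fun p : Ed d × Ed d => c2 p.1 (mid lam p.1 p.2)) γ :=
      (hγ'.integrable hΩc hμ hρ continuous_c2.continuousOn).comp_measurable hmm
    have i2 : Integrable (fun p : Ed d × Ed d => ‖mid lam p.1 p.2 - p.2‖) γ :=
      (hγ''.integrable hΩc hρ hν (f := fun p => ‖p.1 - p.2‖) (by fun_prop)).comp_measurable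
        (measurable_mid.prodMk measurable_snd)
    rw [hc2γ', ← integral_const_mul, ← integral_add i1 (i2.const_mul lam)]
    simp only [c2_mid_add hlam]
  have hwle : wrof lam μ ν ρlam ≤ ∫ p, huber lam p.1 p.2 ∂γ := by
    have h1 := half_W2sq_le hγ'
    have h2 := mul_le_mul_of_nonneg_left hW1le hlam.le
    unfold wrof
    linarith
  have hval : ∀ φ, DualSol Ω lam μ ν φ → wrof lam μ ν ρlam = dualJ Ω μ ν φ := fun φ hφ =>
    le_antisymm (hwle.trans (hγopt φ hφ)) (dualJ_le_wrof hΩc hne hμ hν hμac hρ hlam hφ.1).1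
  have huniq : ∀ φ, DualSol Ω lam μ ν φ → ∀ ρ, ProbOn Ω ρ →
      wrof lam μ ν ρ ≤ wrof lam μ ν ρlam →
        ρ = μ.map (fun x => x - gradient (ctrans c2 Ω φ) x) := fun φ hφ ρ hρ' h =>
    (dualJ_le_wrof hΩc hne hμ hν hμac hρ' hlam hφ.1).2 (h.trans (hval φ hφ).le)
  obtain ⟨φ₀, hφ₀⟩ := exists_dualSol (lam := lam) hΩc hne hμ hν
  have hφc := hφ₀.1.continuousOn
  have hcc := (continuous_ctrans_c2 hΩc hne hφc).continuousOn (s := Ω)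
  -- The next three facts make `φ₀` a quadratic Kantorovich potential for `μ` and `ρlam`.
  have hle : (∫ x, ctrans c2 Ω φ₀ x ∂μ) + ∫ x, φ₀ x ∂ρlam ≤ W2sq μ ρlam / 2 := by
    obtain ⟨γ₂, hγ₂, h⟩ := exists_plan_W2 hΩc hμ hρ
    rw [h]
    exact (weak_duality hΩc hμ hρ hγ₂ hcc hφc continuous_c2
      (ctrans_c2_add_le_c2 hΩc hφc)).1
  have hW2γ' := half_W2sq_le hγ'
  have hge : ∫ p, c2 p.1 p.2 ∂γ' ≤ (∫ x, ctrans c2 Ω φ₀ x ∂μ) + ∫ x, φ₀ x ∂ρlam := by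
    have h1 := hγopt φ₀ hφ₀
    have h2 := integral_le_W1 hΩc hρ hν hlam hφ₀.1
    have h3 := mul_le_mul_of_nonneg_left hW1le hlam.le
    unfold dualJ at h1
    linarith
  have hsub : InSubdiffW2 Ω μ ρlam φ₀ :=
    ⟨hφc, by rw [W2sq_comm]; exact le_antisymm hle (hW2γ'.trans hge)⟩
  have hJ : ∀ φ, LipschitzOnWith (Real.toNNReal lam) φ Ω → dualJ Ω μ ν φ ≤ dualJ Ω μ ν φ₀ :=
    hφ₀.2
  have hSle : ∀ ρ, (⨆ φ ∈ {φ : Ed d → ℝ | InSubdiffW2 Ω μ ρ φ ∧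
      LipschitzOnWith (Real.toNNReal lam) φ Ω},
      (((∫ x, φ x ∂ν) - ∫ x, φ x ∂ρ : ℝ) : EReal)) ≤
      ((dualJ Ω μ ν φ₀ - W2sq ρ μ / 2 : ℝ) : EReal) := by
    intro ρ
    refine iSup₂_le fun φ hφ => ?_
    rw [EReal.coe_le_coe_iff]
    have h1 := hφ.1.2
    have h2 := hJ φ hφ.2
    unfold dualJ at h2 ⊢
    linarith
  have hSeq : (⨆ φ ∈ {φ : Ed d → ℝ | InSubdiffW2 Ω μ ρlam φ ∧
      LipschitzOnWith (Real.toNNReal lam) φ Ω},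
      (((∫ x, φ x ∂ν) - ∫ x, φ x ∂ρlam : ℝ) : EReal)) =
      ((dualJ Ω μ ν φ₀ - W2sq ρlam μ / 2 : ℝ) : EReal) := by
    refine le_antisymm (hSle ρlam) (le_iSup₂_of_le φ₀ ⟨hsub, hφ₀.1⟩ ?_)
    rw [EReal.coe_le_coe_iff]
    have h1 := hsub.2
    unfold dualJ
    linarith
  have hcancel : ∀ a b c : ℝ, ((a : ℝ) : EReal) - (b : EReal) - ((c - b : ℝ) : EReal) =
      ((a - c : ℝ) : EReal) := by
    intro a b c
    rw [← EReal.coe_sub, ← EReal.coe_sub]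
    congr 1
    ring
  have hD : Dlam Ω lam μ ν ρlam = ((W2sq ν μ / 2 - dualJ Ω μ ν φ₀ : ℝ) : EReal) := by
    unfold Dlam
    rw [hSeq, hcancel]
  refine ⟨ρlam, hρ, fun ρ hρ' => ?_, fun ρ hρ' h => ?_, fun φ hφ T _ hT => ?_, ⟨?_, ?_⟩, hval, ?_⟩
  · rw [hval φ₀ hφ₀]
    exact (dualJ_le_wrof hΩc hne hμ hν hμac hρ' hlam hφ₀.1).1
  · rw [huniq φ₀ hφ₀ ρ hρ' h, ← huniq φ₀ hφ₀ ρlam hρ le_rfl]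
  · rw [huniq φ hφ ρlam hρ le_rfl]
    exact Measure.map_congr hT
  · have hset : MeasurableSet {p : Ed d × Ed d | lam < ‖p.1 - p.2‖} :=
      measurableSet_lt measurable_const (by fun_prop)
    have hzero : γ' {p : Ed d × Ed d | lam < ‖p.1 - p.2‖} = 0 := by
      rw [hγ'def, Measure.map_apply hmm hset]
      convert measure_empty (μ := γ)
      ext p
      simpa using norm_sub_mid_le hlam p.1 p.2
    refine ⟨γ', ⟨hγ', fun γ₁ hγ₁ => ?_⟩, hzero⟩
    have h1 : ∫ p, huber lam p.1 p.2 ∂γ' ≤ ∫ p, c2 p.1 p.2 ∂γ' :=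
      integral_mono (hγ'.integrable hΩc hμ hρ continuous_huber.continuousOn)
        (hγ'.integrable hΩc hμ hρ continuous_c2.continuousOn) fun p => huber_le_c2 hlam _ _
    -- `φ₀` is also a dual potential for the Huber cost, so it certifies the optimality.
    refine (h1.trans hge).trans (weak_duality hΩc hμ hρ hγ₁ hcc hφc continuous_huber
      fun x hx y hy => ?_).1
    obtain ⟨h2, h3⟩ := ctrans_c2_add_le hlam hΩc hΩconv hφ₀.1 hx hy
    have h4 := c2_mid_add hlam x y
    linarith
  · intro ρ _ _
    rw [hD, ← hcancel _ (W2sq ρ μ / 2)]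
    exact EReal.sub_le_sub le_rfl (hSle ρ)
  · rw [hD, hval φ₀ hφ₀, ← EReal.coe_sub]
    congr 1
    ring
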